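/- Let m ∈ ℕ and let 𝕏 = {x¹,…,xⁿ} be a random multiset of n points sampled independently and uniformly from 𝕄_m^d. For every k ∈ ℕ with 1 ≤ k < n/2, ℙ( there exists a box B ∈ Ω_m with #(𝕏 ∩ B) ≤ k ) < (2 n^k / (k−1)!) · exp( m · 2^m · log(2^{m+3} d) − n · 2^{−m−4} ). -/

import Mathlib

open MeasureTheory Finset
open scoped Classical

noncomputable section

/-- The `k`-dispersion of a finite point set `P ⊆ [0,1]^d`: the supremum of the volumes of
axis-parallel boxes inside `[0,1]^d` containing at most `k` points of `P`. -/
def kdisp (d k : ℕ) (P : Finset (Fin d → ℝ)) : ℝ :=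
  sSup { v : ℝ | ∃ a b : Fin d → ℝ,
    (∀ i, 0 ≤ a i ∧ a i ≤ b i ∧ b i ≤ 1) ∧
    (P.filter (fun x => ∀ i, x i ∈ Set.Ioo (a i) (b i))).card ≤ k ∧
    v = ∏ i, (b i - a i) }

/-- The minimal `k`-dispersion over all `n`-point subsets of `[0,1]^d`. -/
def kdispStar (d k n : ℕ) : ℝ :=
  sInf { v : ℝ | ∃ P : Finset (Fin d → ℝ),
    (∀ x ∈ P, ∀ i, x i ∈ Set.Icc (0:ℝ) 1) ∧ P.card = n ∧ v = kdisp d k P }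

/-- The one-dimensional mesh `𝕄_m = {1/2^m, 2/2^m, …, (2^m-1)/2^m}`. -/
def Mgrid (m : ℕ) : Finset ℝ := (Finset.Icc 1 (2 ^ m - 1)).image fun j : ℕ => (j : ℝ) / 2 ^ m

/-- The mesh `𝕄_m^d`. -/
def Ggrid (m d : ℕ) : Finset (Fin d → ℝ) := Fintype.piFinset fun _ => Mgrid m

/-- `I` is a subinterval of `[0,1]`. -/
def IsIntervalIn01 (I : Set ℝ) : Prop := I ⊆ Set.Icc 0 1 ∧ I.OrdConnected

/-- Membership of the axis-parallel box `∏_ℓ I ℓ` in the family `Ω_m(s,p)`: the box has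
volume exceeding `2^{-m}`, and for every coordinate `ℓ` one has
`s ℓ / 2^m < vol(I ℓ) ≤ (s ℓ + 1)/2^m` and `inf (I ℓ) ∈ [p ℓ - 2^{-m}, p ℓ)`. -/
def memOmega (m : ℕ) {d : ℕ} (s : Fin d → ℕ) (p : Fin d → ℝ) (I : Fin d → Set ℝ) : Prop :=
  (∀ ℓ, IsIntervalIn01 (I ℓ)) ∧
  ((2:ℝ) ^ m)⁻¹ < (volume (Set.pi Set.univ I)).toReal ∧
  ∀ ℓ, (s ℓ : ℝ) / 2 ^ m < (volume (I ℓ)).toReal ∧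
    (volume (I ℓ)).toReal ≤ ((s ℓ : ℝ) + 1) / 2 ^ m ∧
    sInf (I ℓ) ∈ Set.Ico (p ℓ - ((2:ℝ) ^ m)⁻¹) (p ℓ)

/-- `(s,p)` is an admissible index pair, i.e. `(s,p) ∈ 𝕀_m`: the parameters lie in the
allowed ranges and `Ω_m(s,p) ≠ ∅`. -/
def memIm (m : ℕ) {d : ℕ} (s : Fin d → ℕ) (p : Fin d → ℝ) : Prop :=
  (∀ ℓ, s ℓ < 2 ^ m) ∧
  (∀ ℓ, ∃ j : ℕ, 1 ≤ j ∧ j ≤ 2 ^ m - 1 ∧ p ℓ = (j : ℝ) / 2 ^ m) ∧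
  ∃ I, memOmega m s p I

/-- Membership of `z` in the box `𝔹_m(s,p) = ∏_ℓ [p ℓ, p ℓ + (s ℓ - 1)/2^m]`. -/
def memBox (m : ℕ) {d : ℕ} (s : Fin d → ℕ) (p : Fin d → ℝ) (z : Fin d → ℝ) : Prop :=
  ∀ ℓ, z ℓ ∈ Set.Icc (p ℓ) (p ℓ + ((s ℓ : ℝ) - 1) / 2 ^ m)

/-!
Shrinking a box of volume exceeding `1 / N` to the mesh points it must contain leaves finitely many
discretised boxes, so a union bound reduces the theorem to two estimates.

* A discretised box is described in each coordinate by margins `(a, b)`, and its hull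
  `∏ [a / N, 1 - b / N]` still has volume exceeding `1 / N`. By Rankin's trick, the number of such
  hulls is at most the sum of `(N * volume) ^ t`, which factors over the coordinates into geometric
  series.
* By convexity of `x ^ α` with `N ^ α = 16 * N`, a discretised interval with hull length `w`
  contains at least the proportion `w ^ α` of the mesh. Hence a discretised box contains at least
  the proportion `1 / (16 * N)` of the grid, and a binomial tail estimate bounds the probability
  that it receives at most `k` of the samples.
-/

section BinomialTail

lemma pow_mul_pow_sub_le {b c y : ℝ} {j n : ℕ} (hb : 0 ≤ b) (hc : 0 ≤ c) (hcy : c ≤ y)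
    (hbc : b + c ≤ 2 * y) (hj : 2 * j ≤ n) : b ^ j * c ^ (n - j) ≤ y ^ n := by
  have hmul : b * c ≤ y ^ 2 := by nlinarith [sq_nonneg (b - c)]
  calc b ^ j * c ^ (n - j) = (b * c) ^ j * c ^ (n - 2 * j) := by
        rw [show n - j = j + (n - 2 * j) by omega, pow_add, mul_pow, mul_assoc]
    _ ≤ (y ^ 2) ^ j * y ^ (n - 2 * j) := by gcongr
    _ = y ^ n := by rw [← pow_mul, ← pow_add, Nat.add_sub_cancel' hj]

lemma choose_le_choose_of_two_mul_le {n j k : ℕ} (hjk : j ≤ k) (hkn : 2 * k ≤ n) :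
    n.choose j ≤ n.choose k := by
  induction k, hjk using Nat.le_induction with
  | base => rfl
  | succ k _ ih => exact (ih (by omega)).trans (Nat.choose_le_succ_of_lt_half_left (by omega))

lemma succ_mul_choose_le {n k : ℕ} (hk : 1 ≤ k) :
    ((k : ℝ) + 1) * n.choose k ≤ 2 * (n : ℝ) ^ k / (k - 1).factorial := by
  obtain ⟨k, rfl⟩ := Nat.exists_eq_add_of_le' hk
  calc ((k + 1 : ℕ) + 1 : ℝ) * n.choose (k + 1)
      ≤ (2 * (k + 1)) * ((n : ℝ) ^ (k + 1) / (k + 1).factorial) := by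
        gcongr
        · push_cast
          linarith [(Nat.cast_nonneg k : (0 : ℝ) ≤ k)]
        · exact Nat.choose_le_pow_div (k + 1) n
    _ = 2 * (n : ℝ) ^ (k + 1) / (k + 1 - 1).factorial := by
        rw [Nat.factorial_succ, Nat.add_sub_cancel]
        push_cast
        field_simp

variable {α κ : Type*} [Fintype κ]

lemma card_filter_card_le_le {k : ℕ} (hk : 2 * k ≤ Fintype.card κ) :
    #{J : Finset κ | #J ≤ k} ≤ (k + 1) * (Fintype.card κ).choose k := by
  have hcover : ({J : Finset κ | #J ≤ k} : Finset _) ⊆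
      (range (k + 1)).biUnion fun j => powersetCard j univ := fun J hJ => by
    simpa [Nat.lt_succ_iff] using hJ
  calc #{J : Finset κ | #J ≤ k}
      ≤ #((range (k + 1)).biUnion fun j => powersetCard j (univ : Finset κ)) :=
        card_le_card hcover
    _ ≤ #(range (k + 1)) * (Fintype.card κ).choose k := by
        refine card_biUnion_le_card_mul _ _ _ fun j hj => ?_
        rw [card_powersetCard, card_univ]
        exact choose_le_choose_of_two_mul_le (Nat.lt_succ_iff.1 (mem_range.1 hj)) hk
    _ = (k + 1) * (Fintype.card κ).choose k := by rw [card_range]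

variable [DecidableEq κ]

lemma card_piFinset_ite (J : Finset κ) (A B : Finset α) :
    #(Fintype.piFinset fun i => if i ∈ J then A else B) =
      #A ^ #J * #B ^ (Fintype.card κ - #J) := by
  simp only [Fintype.card_piFinset, apply_ite Finset.card]
  rw [prod_ite, prod_const, prod_const, ← compl_filter, card_compl, filter_univ_mem]

/-- The sample sequences in `G`, indexed by `κ`, that hit `A` at most `k` times. -/
def sparseSamples (κ : Type*) [Fintype κ] [DecidableEq κ] (G A : Finset α) (k : ℕ) :
    Finset (κ → α) :=
  (Fintype.piFinset fun _ => G).filter fun ω => #{i | ω i ∈ A} ≤ k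

lemma sparseSamples_subset_biUnion (G A : Finset α) (k : ℕ) :
    sparseSamples κ G A k ⊆
      ({J : Finset κ | #J ≤ k} : Finset _).biUnion fun J =>
        Fintype.piFinset fun i => if i ∈ J then A else G \ A := by
  intro ω hω
  simp only [sparseSamples, mem_filter, Fintype.mem_piFinset] at hω
  obtain ⟨hωG, hωk⟩ := hω
  simp only [mem_biUnion, mem_filter, mem_univ, true_and, Fintype.mem_piFinset]
  refine ⟨_, hωk, fun i => ?_⟩
  by_cases hi : ω i ∈ A <;> simp [hi, hωG i]

lemma card_sparseSamples_le {G A : Finset α} {k : ℕ} {x : ℝ} (hAG : A ⊆ G)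
    (hk : 2 * k ≤ Fintype.card κ) (hx : x ≤ 1 / 2) (hA : x * #G ≤ #A) :
    (#(sparseSamples κ G A k) : ℝ) ≤
      (k + 1) * (Fintype.card κ).choose k * Real.exp (-(Fintype.card κ * x)) *
        (#G : ℝ) ^ Fintype.card κ := by
  have hsdiff : (#(G \ A) : ℝ) = #G - #A := cast_card_sdiff hAG
  have hxG : x * #G ≤ 1 / 2 * #G := by gcongr
  have hterm : ∀ J ∈ ({J : Finset κ | #J ≤ k} : Finset _),
      (#(Fintype.piFinset fun i => if i ∈ J then A else G \ A) : ℝ) ≤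
        ((1 - x) * #G) ^ Fintype.card κ := by
    intro J hJ
    rw [card_piFinset_ite]
    push_cast
    have hJk : #J ≤ k := (mem_filter.1 hJ).2
    exact pow_mul_pow_sub_le (by positivity) (by positivity) (by linarith) (by linarith) (by omega)
  calc (#(sparseSamples κ G A k) : ℝ)
      ≤ ∑ J : Finset κ with #J ≤ k,
          (#(Fintype.piFinset fun i => if i ∈ J then A else G \ A) : ℝ) := by
        exact_mod_cast (card_le_card (sparseSamples_subset_biUnion G A k)).trans card_biUnion_le
    _ ≤ #{J : Finset κ | #J ≤ k} * ((1 - x) * #G) ^ Fintype.card κ := by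
        simpa using sum_le_card_nsmul _ _ _ hterm
    _ ≤ ((k + 1) * (Fintype.card κ).choose k) *
          (Real.exp (-x) * #G) ^ Fintype.card κ := by
        gcongr
        · exact pow_nonneg (mul_nonneg (by linarith) (by positivity)) _
        · exact_mod_cast card_filter_card_le_le hk
        · exact mul_nonneg (by linarith) (by positivity)
        · exact Real.one_sub_le_exp_neg x
    _ = _ := by rw [mul_pow, ← Real.exp_nat_mul, mul_neg, mul_assoc]; ring

end BinomialTail

section Intervals

/-- The mesh `{1/N, 2/N, …, (N-1)/N}`; it is `𝕄_m` for `N = 2 ^ m`. -/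
def mesh (N : ℕ) : Finset ℝ := (Finset.Icc 1 (N - 1)).image fun j : ℕ => (j : ℝ) / N

/-- The pairs `(a, b)` describing a discretised interval with hull `[a/N, 1 - b/N]`; the condition
says that the interior of the hull contains a mesh point. -/
def margins (N : ℕ) : Finset (ℕ × ℕ) :=
  (range N ×ˢ range N).filter fun z => z.1 + z.2 + 2 ≤ N

/-- The length of the hull `[a/N, 1 - b/N]` of the discretised interval with margins `(a, b)`. -/
def hullLength (N : ℕ) (z : ℕ × ℕ) : ℝ := 1 - (z.1 + z.2) / N

/-- The discretised interval with margins `(a, b)`: the mesh points in the open interval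
`(a/N, 1 - b/N)`. -/
def core (N : ℕ) (z : ℕ × ℕ) : Finset ℝ :=
  (Finset.Ioo z.1 (N - z.2)).image fun j : ℕ => (j : ℝ) / N

variable {N : ℕ} {z : ℕ × ℕ}

lemma add_two_le_of_mem_margins (hz : z ∈ margins N) : (z.1 + z.2 + 2 : ℝ) ≤ N := by
  exact_mod_cast (mem_filter.1 hz).2

lemma hullLength_pos (hz : z ∈ margins N) : 0 < hullLength N z := by
  have h := add_two_le_of_mem_margins hz
  have hN : (0 : ℝ) < N := by linarith [(by positivity : (0 : ℝ) ≤ z.1 + z.2)]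
  rw [hullLength, sub_pos, div_lt_one hN]
  linarith

lemma natCast_div_injective (hN : N ≠ 0) : Function.Injective fun j : ℕ => (j : ℝ) / N :=
  fun _ _ h => Nat.cast_injective ((div_left_inj' (Nat.cast_ne_zero.2 hN)).1 h)

lemma card_mesh (hN : N ≠ 0) : #(mesh N) = N - 1 := by
  rw [mesh, card_image_of_injective _ (natCast_div_injective hN), Nat.card_Icc, Nat.add_sub_cancel]

lemma card_core (hz : z ∈ margins N) : (#(core N z) : ℝ) = N - 1 - (z.1 + z.2) := by
  have h := (mem_filter.1 hz).2
  rw [core, card_image_of_injective _ (natCast_div_injective (by omega)), Nat.card_Ioo,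
    show N - z.2 - z.1 - 1 = N - (z.1 + z.2 + 1) by omega, Nat.cast_sub (by omega)]
  push_cast
  ring

lemma core_subset_mesh : core N z ⊆ mesh N :=
  image_subset_image fun j hj => by
    simp only [Finset.mem_Ioo, Finset.mem_Icc] at hj ⊢
    omega

lemma IsIntervalIn01.toReal_volume_le {I : Set ℝ} (hI : IsIntervalIn01 I) :
    (volume I).toReal ≤ sSup I - sInf I := by
  have hbdd : Bornology.IsBounded I := (Metric.isBounded_Icc 0 1).subset hI.1
  refine ENNReal.toReal_le_of_le_ofReal ?_ ((Real.volume_le_diam I).trans_eq (Real.ediam_eq hbdd))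
  exact sub_nonneg.2 (Real.sInf_le_sSup I hbdd.bddBelow hbdd.bddAbove)

lemma IsIntervalIn01.toReal_volume_le_one {I : Set ℝ} (hI : IsIntervalIn01 I) :
    (volume I).toReal ≤ 1 :=
  ENNReal.toReal_le_of_le_ofReal zero_le_one ((measure_mono hI.1).trans (by simp))

lemma IsIntervalIn01.core_subset {I : Set ℝ} (hI : IsIntervalIn01 I) (hne : I.Nonempty)
    (hN : 0 < N) (hinf : sInf I * N < z.1 + 1) (hsup : (1 - sSup I) * N < z.2 + 1) :
    (core N z : Set ℝ) ⊆ I := by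
  have hN' : (0 : ℝ) < N := by exact_mod_cast hN
  have hIoo : Set.Ioo (sInf I) (sSup I) ⊆ I :=
    IsConnected.Ioo_csInf_csSup_subset ⟨hne, hI.2.isPreconnected⟩
      (bddBelow_Icc.mono hI.1) (bddAbove_Icc.mono hI.1)
  rintro _ hx
  obtain ⟨j, hj, rfl⟩ := mem_image.1 (mem_coe.1 hx)
  obtain ⟨hz₁, hz₂⟩ := Finset.mem_Ioo.1 hj
  have hz₁' : (z.1 + 1 : ℝ) ≤ j := by exact_mod_cast hz₁
  have hz₂' : (j + z.2 + 1 : ℝ) ≤ N := by exact_mod_cast (by omega : j + z.2 + 1 ≤ N)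
  refine hIoo ⟨?_, ?_⟩
  · rw [lt_div_iff₀ hN']
    linarith
  · rw [div_lt_iff₀ hN']
    linarith

lemma IsIntervalIn01.exists_core_subset {I : Set ℝ} (hI : IsIntervalIn01 I) (hN : 0 < N)
    (hvol : (N : ℝ)⁻¹ < (volume I).toReal) :
    ∃ z ∈ margins N, (volume I).toReal ≤ hullLength N z ∧ (core N z : Set ℝ) ⊆ I := by
  have hI0 : (0 : ℝ) < (volume I).toReal := (by positivity : (0 : ℝ) ≤ (N : ℝ)⁻¹).trans_lt hvol
  have hne : I.Nonempty := by
    by_contra! rfl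
    simp at hI0
  have hlen : (volume I).toReal ≤ sSup I - sInf I := hI.toReal_volume_le
  have hinf : 0 ≤ sInf I := le_csInf hne fun x hx => (hI.1 hx).1
  have hsup : sSup I ≤ 1 := csSup_le hne fun x hx => (hI.1 hx).2
  have hN' : (0 : ℝ) < N := by exact_mod_cast hN
  set a := ⌊sInf I * N⌋₊
  set b := ⌊(1 - sSup I) * N⌋₊
  have ha : (a : ℝ) ≤ sInf I * N := Nat.floor_le (by positivity)
  have hb : (b : ℝ) ≤ (1 - sSup I) * N := Nat.floor_le (mul_nonneg (by linarith) hN'.le)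
  have hhull : (a + b : ℝ) ≤ (1 - (sSup I - sInf I)) * N := by linarith
  have hab : a + b + 1 < N := by
    have : (a + b + 1 : ℝ) < N := by
      have := (inv_lt_iff_one_lt_mul₀ hN').1 (hvol.trans_le hlen)
      linarith
    exact_mod_cast this
  refine ⟨(a, b), ?_, ?_, ?_⟩
  · simp only [margins, mem_filter, mem_product, mem_range]
    omega
  · have := (div_le_iff₀ hN').2 hhull
    rw [hullLength]
    linarith
  · exact hI.core_subset hne hN (Nat.lt_floor_add_one _) (Nat.lt_floor_add_one _)

end Intervals

section Density

variable {N : ℕ}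

lemma two_div_rpow_mul_le_one (hN : 2 ≤ N) :
    (2 / N : ℝ) ^ Real.logb N (16 * N) * (N - 1) ≤ 1 := by
  obtain rfl | hN3 := hN.eq_or_lt
  · norm_num
  have hN3' : (3 : ℝ) ≤ N := by exact_mod_cast hN3
  have hexp : Real.logb N (16 * N) ≤ 4 := by
    rw [Real.logb_le_iff_le_rpow (by linarith) (by positivity), Real.rpow_ofNat]
    nlinarith [pow_le_pow_left₀ (by norm_num) hN3' 3]
  have htwo : (2 : ℝ) ^ Real.logb N (16 * N) ≤ 16 :=
    calc (2 : ℝ) ^ Real.logb N (16 * N) ≤ (2 : ℝ) ^ (4 : ℝ) := by gcongr; norm_num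
      _ = 16 := by norm_num
  rw [Real.div_rpow zero_le_two (by positivity),
    Real.rpow_logb (by positivity) (by linarith) (by positivity), div_mul_eq_mul_div,
    div_le_one (by positivity)]
  nlinarith

lemma one_sub_div_rpow_mul_le {s : ℝ} (hN : 2 ≤ N) (hs : 0 ≤ s) (hsN : s + 2 ≤ N) :
    (1 - s / N) ^ Real.logb N (16 * N) * (N - 1) ≤ N - 1 - s := by
  have hN2 : (2 : ℝ) ≤ N := by exact_mod_cast hN
  set α := Real.logb N (16 * N)
  have hα : 1 ≤ α := by
    rw [Real.le_logb_iff_rpow_le (by linarith) (by positivity), Real.rpow_one]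
    linarith
  set t := s / (N - 2)
  have ht : t * (N - 2) = s := div_mul_cancel_of_imp fun h => by linarith
  have ht0 : 0 ≤ t := div_nonneg hs (by linarith)
  have ht1 : t ≤ 1 := div_le_one_of_le₀ (by linarith) (by linarith)
  have hchord : 1 - s / N = t * (2 / N) + (1 - t) * 1 := by
    rw [← ht]
    field_simp
    ring
  have hconv : (1 - s / N) ^ α ≤ t * (2 / N : ℝ) ^ α + (1 - t) := by
    have := (convexOn_rpow hα).2 (Set.mem_Ici.2 (by positivity : (0 : ℝ) ≤ 2 / N))
      (Set.mem_Ici.2 zero_le_one) ht0 (sub_nonneg.2 ht1) (add_sub_cancel t 1)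
    rw [hchord]
    simpa only [smul_eq_mul, Real.one_rpow, mul_one] using this
  calc (1 - s / N) ^ α * (N - 1) ≤ (t * (2 / N : ℝ) ^ α + (1 - t)) * (N - 1) := by
        gcongr
        linarith
    _ = t * ((2 / N : ℝ) ^ α * (N - 1)) + (1 - t) * (N - 1) := by ring
    _ ≤ t * 1 + (1 - t) * (N - 1) := by gcongr; exact two_div_rpow_mul_le_one hN
    _ = N - 1 - s := by linarith

end Density

section Boxes

variable {ι : Type*} [Fintype ι] [DecidableEq ι] {N : ℕ} {σ : ι → ℕ × ℕ}

/-- The grid `mesh N ^ ι`; it is `𝕄_m^d` for `N = 2 ^ m` and `ι = Fin d`. -/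
def grid (ι : Type*) [Fintype ι] [DecidableEq ι] (N : ℕ) : Finset (ι → ℝ) :=
  Fintype.piFinset fun _ => mesh N

/-- The margins, one pair per coordinate, of the discretised boxes whose hull has volume exceeding
`1/N`. -/
def boxMargins (ι : Type*) [Fintype ι] [DecidableEq ι] (N : ℕ) : Finset (ι → ℕ × ℕ) :=
  (Fintype.piFinset fun _ => margins N).filter fun σ => (N : ℝ)⁻¹ < ∏ ℓ, hullLength N (σ ℓ)

/-- The discretised box with margins `σ`: the grid points in the interior of its hull. -/
def boxCore (N : ℕ) (σ : ι → ℕ × ℕ) : Finset (ι → ℝ) := Fintype.piFinset fun ℓ => core N (σ ℓ)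

lemma mem_margins_of_mem_boxMargins (hσ : σ ∈ boxMargins ι N) (ℓ : ι) : σ ℓ ∈ margins N :=
  Fintype.mem_piFinset.1 (mem_filter.1 hσ).1 ℓ

lemma boxCore_subset_grid : boxCore N σ ⊆ grid ι N :=
  Fintype.piFinset_subset _ _ fun _ => core_subset_mesh

lemma inv_mul_card_grid_le_card_boxCore (hN : 2 ≤ N) (hσ : σ ∈ boxMargins ι N) :
    (16 * N : ℝ)⁻¹ * #(grid ι N) ≤ #(boxCore N σ) := by
  have hN' : (2 : ℝ) ≤ N := by exact_mod_cast hN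
  have hmargins := mem_margins_of_mem_boxMargins hσ
  have hlen : ∀ ℓ, 0 ≤ hullLength N (σ ℓ) := fun ℓ => (hullLength_pos (hmargins ℓ)).le
  set α := Real.logb N (16 * N) with hα
  have hα0 : 0 ≤ α := Real.logb_nonneg (by linarith) (by linarith)
  have hcore : ∀ ℓ, hullLength N (σ ℓ) ^ α * (N - 1) ≤ #(core N (σ ℓ)) := fun ℓ => by
    rw [card_core (hmargins ℓ)]
    exact one_sub_div_rpow_mul_le hN (by positivity) (add_two_le_of_mem_margins (hmargins ℓ))
  calc (16 * N : ℝ)⁻¹ * #(grid ι N) = ((N : ℝ)⁻¹) ^ α * ∏ _ℓ : ι, (N - 1 : ℝ) := by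
        rw [Real.inv_rpow (by positivity), hα,
          Real.rpow_logb (by positivity) (by linarith) (by positivity), grid,
          Fintype.card_piFinset, Nat.cast_prod, card_mesh (by omega), Nat.cast_pred (by omega)]
    _ ≤ (∏ ℓ, hullLength N (σ ℓ)) ^ α * ∏ _ℓ : ι, (N - 1 : ℝ) := by
        gcongr
        · exact prod_nonneg fun _ _ => by linarith
        · exact (mem_filter.1 hσ).2.le
    _ = ∏ ℓ, hullLength N (σ ℓ) ^ α * (N - 1) := by
        rw [← Real.finsetProd_rpow _ _ fun ℓ _ => hlen ℓ, prod_mul_distrib]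
    _ ≤ ∏ ℓ, (#(core N (σ ℓ)) : ℝ) :=
        prod_le_prod (fun ℓ _ => mul_nonneg (Real.rpow_nonneg (hlen ℓ) _) (by linarith))
          fun ℓ _ => hcore ℓ
    _ = #(boxCore N σ) := by rw [boxCore, Fintype.card_piFinset, Nat.cast_prod]

lemma exists_boxCore_subset_pi {I : ι → Set ℝ} (hN : 0 < N)
    (hI : ∀ ℓ, IsIntervalIn01 (I ℓ)) (hvol : (N : ℝ)⁻¹ < (volume (Set.pi Set.univ I)).toReal) :
    ∃ σ ∈ boxMargins ι N, (boxCore N σ : Set (ι → ℝ)) ⊆ Set.pi Set.univ I := by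
  rw [volume_pi_pi, ENNReal.toReal_prod] at hvol
  have hside : ∀ ℓ, (N : ℝ)⁻¹ < (volume (I ℓ)).toReal := fun ℓ => by
    refine hvol.trans_le ?_
    rw [← mul_prod_erase _ _ (mem_univ ℓ)]
    exact mul_le_of_le_one_right ENNReal.toReal_nonneg <|
      prod_le_one (fun _ _ => ENNReal.toReal_nonneg) fun i _ => (hI i).toReal_volume_le_one
  choose σ hmem hlen hcore using fun ℓ => (hI ℓ).exists_core_subset hN (hside ℓ)
  refine ⟨σ, mem_filter.2 ⟨Fintype.mem_piFinset.2 hmem, hvol.trans_le ?_⟩, ?_⟩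
  · exact prod_le_prod (fun _ _ => ENNReal.toReal_nonneg) fun ℓ _ => hlen ℓ
  · rw [boxCore, Fintype.coe_piFinset]
    exact Set.pi_mono fun ℓ _ => hcore ℓ

end Boxes

section Counting

variable {ι : Type*} [Fintype ι] [DecidableEq ι] {N : ℕ} {c : ℝ}

lemma hullLength_rpow_le {z : ℕ × ℕ} (hz : z ∈ margins N) (hc : 0 ≤ c) :
    hullLength N z ^ (N * c) ≤ Real.exp (-c) ^ z.1 * Real.exp (-c) ^ z.2 := by
  have hN : (N : ℝ) ≠ 0 := by
    linarith [add_two_le_of_mem_margins hz, (by positivity : (0 : ℝ) ≤ z.1 + z.2)]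
  calc hullLength N z ^ (N * c) ≤ Real.exp (-((z.1 + z.2) / N)) ^ (N * c) :=
        Real.rpow_le_rpow (hullLength_pos hz).le (Real.one_sub_le_exp_neg _) (by positivity)
    _ = Real.exp (-c) ^ z.1 * Real.exp (-c) ^ z.2 := by
        rw [← Real.exp_mul, ← pow_add, ← Real.exp_nat_mul]
        congr 1
        push_cast
        field_simp

lemma sum_hullLength_rpow_le (hc : 0 < c) :
    ∑ z ∈ margins N, hullLength N z ^ (N * c) ≤ (1 - Real.exp (-c))⁻¹ ^ 2 := by
  set q := Real.exp (-c)
  have hq0 : 0 ≤ q := Real.exp_nonneg _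
  have hq1 : q < 1 := Real.exp_lt_one_iff.2 (neg_lt_zero.2 hc)
  have hgeom : ∑ i ∈ range N, q ^ i ≤ (1 - q)⁻¹ := by
    simpa only [range_eq_Ico, pow_zero, one_div] using
      geom_sum_Ico_le_of_lt_one (m := 0) (n := N) hq0 hq1
  calc ∑ z ∈ margins N, hullLength N z ^ (N * c)
      ≤ ∑ z ∈ margins N, q ^ z.1 * q ^ z.2 := sum_le_sum fun z hz => hullLength_rpow_le hz hc.le
    _ ≤ ∑ z ∈ range N ×ˢ range N, q ^ z.1 * q ^ z.2 :=
        sum_le_sum_of_subset_of_nonneg (filter_subset _ _) fun _ _ _ => by positivity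
    _ = (∑ i ∈ range N, q ^ i) ^ 2 := by rw [sum_product, sq, sum_mul_sum]
    _ ≤ (1 - q)⁻¹ ^ 2 := by gcongr

lemma card_boxMargins_le_rpow_mul (hN : 0 < N) (hc : 0 < c) :
    (#(boxMargins ι N) : ℝ) ≤
      (N : ℝ) ^ (N * c) * ((1 - Real.exp (-c))⁻¹ ^ 2) ^ Fintype.card ι := by
  have hlen : ∀ σ ∈ Fintype.piFinset (fun _ : ι => margins N), ∀ ℓ, 0 ≤ hullLength N (σ ℓ) :=
    fun _ hσ ℓ => (hullLength_pos (Fintype.mem_piFinset.1 hσ ℓ)).le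
  have hone : ∀ σ ∈ boxMargins ι N,
      1 ≤ (N : ℝ) ^ (N * c) * ∏ ℓ, hullLength N (σ ℓ) ^ (N * c) := by
    intro σ hσ
    obtain ⟨hσ, hvol⟩ := mem_filter.1 hσ
    rw [Real.finsetProd_rpow _ _ fun ℓ _ => hlen σ hσ ℓ,
      ← Real.mul_rpow (by positivity) (prod_nonneg fun ℓ _ => hlen σ hσ ℓ)]
    exact Real.one_le_rpow ((inv_le_iff_one_le_mul₀' (by positivity)).1 hvol.le) (by positivity)
  calc (#(boxMargins ι N) : ℝ) = ∑ _σ ∈ boxMargins ι N, (1 : ℝ) := by simp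
    _ ≤ ∑ σ ∈ boxMargins ι N, (N : ℝ) ^ (N * c) * ∏ ℓ, hullLength N (σ ℓ) ^ (N * c) :=
        sum_le_sum hone
    _ ≤ ∑ σ ∈ Fintype.piFinset fun _ : ι => margins N,
          (N : ℝ) ^ (N * c) * ∏ ℓ, hullLength N (σ ℓ) ^ (N * c) :=
        sum_le_sum_of_subset_of_nonneg (filter_subset _ _) fun _ hσ _ =>
          mul_nonneg (by positivity) (prod_nonneg fun ℓ _ => Real.rpow_nonneg (hlen _ hσ ℓ) _)
    _ = (N : ℝ) ^ (N * c) * (∑ z ∈ margins N, hullLength N z ^ (N * c)) ^ Fintype.card ι := by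
        rw [← mul_sum, sum_prod_piFinset (margins N) fun (_ : ι) z => hullLength N z ^ (N * c),
          prod_const, card_univ]
    _ ≤ (N : ℝ) ^ (N * c) * ((1 - Real.exp (-c))⁻¹ ^ 2) ^ Fintype.card ι := by
        gcongr
        · exact sum_nonneg fun z hz => Real.rpow_nonneg (hullLength_pos hz).le _
        · exact sum_hullLength_rpow_le hc

lemma card_boxMargins_le [Nonempty ι] (hN : 0 < N) :
    (#(boxMargins ι N) : ℝ) ≤ 2 * (N : ℝ) ^ (N * Real.log (4 * Fintype.card ι)) := by
  set d := Fintype.card ι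
  have hd : (1 : ℝ) ≤ d := by exact_mod_cast Fintype.card_pos (α := ι)
  set q := Real.exp (-Real.log (4 * d))
  have hqd : q * (4 * d) = 1 := by
    simp only [q, Real.exp_neg, Real.exp_log (by positivity : (0 : ℝ) < 4 * d)]
    exact inv_mul_cancel₀ (by positivity)
  have hq1 : q ≤ 1 := by nlinarith [Real.exp_nonneg (-Real.log (4 * d))]
  have hbernoulli : 1 / 2 ≤ (1 - q) ^ (2 * d) := by
    have := one_add_mul_le_pow (a := -q) (by linarith) (2 * d)
    push_cast at this
    rw [← sub_eq_add_neg] at this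
    linarith
  have hinv : ((1 - q)⁻¹ ^ 2) ^ d ≤ 2 := by
    rw [← pow_mul, inv_pow]
    exact inv_le_of_inv_le₀ two_pos (by rwa [← one_div])
  calc (#(boxMargins ι N) : ℝ)
      ≤ (N : ℝ) ^ (N * Real.log (4 * d)) * ((1 - q)⁻¹ ^ 2) ^ d :=
        card_boxMargins_le_rpow_mul hN (Real.log_pos (by linarith))
    _ ≤ (N : ℝ) ^ (N * Real.log (4 * d)) * 2 := by gcongr
    _ = 2 * (N : ℝ) ^ (N * Real.log (4 * d)) := mul_comm _ _

lemma two_mul_rpow_lt_exp {x d : ℝ} (hx : 2 ≤ x) (hd : 1 ≤ d) :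
    2 * x ^ (x * Real.log (4 * d)) < Real.exp (Real.logb 2 x * x * Real.log (8 * x * d)) := by
  have hlog2 : 0 < Real.log 2 := Real.log_pos one_lt_two
  have hlogb : 1 ≤ Real.logb 2 x := by
    rwa [Real.le_logb_iff_rpow_le one_lt_two (by positivity), Real.rpow_one]
  have hlog_le : Real.log x ≤ Real.logb 2 x :=
    le_div_self (Real.log_nonneg (by linarith)) hlog2 (by linarith [Real.log_two_lt_d9])
  have hlog4d : 0 ≤ Real.log (4 * d) := Real.log_nonneg (by linarith)
  have hlog2x : Real.log 2 ≤ Real.log (2 * x) := Real.log_le_log two_pos (by linarith)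
  have hsplit : Real.log (8 * x * d) = Real.log (4 * d) + Real.log (2 * x) := by
    rw [← Real.log_mul (by positivity) (by positivity)]
    ring_nf
  calc 2 * x ^ (x * Real.log (4 * d))
      = Real.exp (Real.log x * x * Real.log (4 * d) + 1 * Real.log 2) := by
        rw [Real.exp_add, one_mul, Real.exp_log two_pos, Real.rpow_def_of_pos (by positivity),
          mul_comm, mul_assoc (Real.log x)]
    _ < Real.exp (Real.logb 2 x * x * Real.log (8 * x * d)) := by
        rw [hsplit, mul_add]
        have hpos : 1 < Real.logb 2 x * x := by nlinarith
        exact Real.exp_lt_exp.2 <| add_lt_add_of_le_of_lt (by gcongr) <|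
          mul_lt_mul hpos hlog2x hlog2 (by positivity)

end Counting

section UnionBound

variable {ι κ : Type*} [Fintype ι] [DecidableEq ι] [Fintype κ] [DecidableEq κ] {N k : ℕ}

/-- The sample sequences in the grid, indexed by `κ`, for which some box in `[0,1]^ι` of volume
exceeding `1/N` contains at most `k` of the samples. For `N = 2 ^ m` and `ι = Fin d` these boxes
are the members of `Ω_m`. -/
def boxSparseSamples (ι κ : Type*) [Fintype ι] [DecidableEq ι] [Fintype κ] [DecidableEq κ]
    (N k : ℕ) : Finset (κ → ι → ℝ) :=
  (Fintype.piFinset fun _ => grid ι N).filter fun ω =>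
    ∃ I : ι → Set ℝ, (∀ ℓ, IsIntervalIn01 (I ℓ)) ∧
      (N : ℝ)⁻¹ < (volume (Set.pi Set.univ I)).toReal ∧
      #{i | ω i ∈ Set.pi Set.univ I} ≤ k

lemma boxSparseSamples_subset_biUnion (hN : 0 < N) :
    boxSparseSamples ι κ N k ⊆
      (boxMargins ι N).biUnion fun σ => sparseSamples κ (grid ι N) (boxCore N σ) k := by
  intro ω hω
  obtain ⟨hωG, I, hI, hvol, hcard⟩ := mem_filter.1 hω
  obtain ⟨σ, hσ, hcore⟩ := exists_boxCore_subset_pi hN hI hvol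
  refine mem_biUnion.2 ⟨σ, hσ, mem_filter.2 ⟨hωG, le_trans (card_le_card ?_) hcard⟩⟩
  intro i hi
  simp only [mem_filter, mem_univ, true_and] at hi ⊢
  exact hcore hi

lemma card_boxSparseSamples_le (hN : 2 ≤ N) (hk : 2 * k ≤ Fintype.card κ) :
    (#(boxSparseSamples ι κ N k) : ℝ) ≤
      #(boxMargins ι N) * ((k + 1) * (Fintype.card κ).choose k *
        Real.exp (-(Fintype.card κ / (16 * N))) * (#(grid ι N) : ℝ) ^ Fintype.card κ) := by
  have hsmall : (16 * N : ℝ)⁻¹ ≤ 1 / 2 := by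
    rw [one_div]
    have : (2 : ℝ) ≤ N := by exact_mod_cast hN
    gcongr
    linarith
  calc (#(boxSparseSamples ι κ N k) : ℝ)
      ≤ ∑ σ ∈ boxMargins ι N, (#(sparseSamples κ (grid ι N) (boxCore N σ) k) : ℝ) := by
        exact_mod_cast (card_le_card (boxSparseSamples_subset_biUnion (by omega))).trans
          card_biUnion_le
    _ ≤ _ := by
        rw [← nsmul_eq_mul]
        exact sum_le_card_nsmul _ _ _ fun σ hσ => card_sparseSamples_le boxCore_subset_grid hk
          hsmall (inv_mul_card_grid_le_card_boxCore hN hσ)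

theorem statement_7_general [Nonempty ι] (hN : 2 ≤ N) (hk : 1 ≤ k)
    (hkn : 2 * k ≤ Fintype.card κ) :
    (#(boxSparseSamples ι κ N k) : ℝ) / #(Fintype.piFinset fun _ : κ => grid ι N) <
      2 * (Fintype.card κ : ℝ) ^ k / (k - 1).factorial *
        Real.exp (Real.logb 2 N * N * Real.log (8 * N * Fintype.card ι) -
          Fintype.card κ / (16 * N)) := by
  set n := Fintype.card κ
  have hN' : (2 : ℝ) ≤ N := by exact_mod_cast hN
  have hd : (1 : ℝ) ≤ Fintype.card ι := by exact_mod_cast Fintype.card_pos (α := ι)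
  have hn : 0 < n := by omega
  have hgrid : 0 < #(grid ι N) := by
    rw [grid, Fintype.card_piFinset, prod_const, card_mesh (by omega)]
    exact pow_pos (by omega) _
  have hsamples : (#(Fintype.piFinset fun _ : κ => grid ι N) : ℝ) = (#(grid ι N) : ℝ) ^ n := by
    rw [Fintype.card_piFinset, prod_const, card_univ, Nat.cast_pow]
  have hmargins : (#(boxMargins ι N) : ℝ) <
      Real.exp (Real.logb 2 N * N * Real.log (8 * N * Fintype.card ι)) :=
    (card_boxMargins_le (by omega)).trans_lt (two_mul_rpow_lt_exp hN' hd)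
  rw [hsamples, div_lt_iff₀ (by positivity), sub_eq_add_neg, Real.exp_add]
  calc (#(boxSparseSamples ι κ N k) : ℝ)
      ≤ #(boxMargins ι N) * ((k + 1) * n.choose k * Real.exp (-(n / (16 * N))) *
          (#(grid ι N) : ℝ) ^ n) := card_boxSparseSamples_le hN hkn
    _ ≤ #(boxMargins ι N) * (2 * (n : ℝ) ^ k / (k - 1).factorial * Real.exp (-(n / (16 * N))) *
          (#(grid ι N) : ℝ) ^ n) := by
        gcongr
        exact succ_mul_choose_le hk
    _ < Real.exp (Real.logb 2 N * N * Real.log (8 * N * Fintype.card ι)) *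
          (2 * (n : ℝ) ^ k / (k - 1).factorial * Real.exp (-(n / (16 * N))) *
          (#(grid ι N) : ℝ) ^ n) := by gcongr
    _ = _ := by ring

end UnionBound

lemma Ggrid_eq_grid (m d : ℕ) : Ggrid m d = grid (Fin d) (2 ^ m) := by
  simp [Ggrid, Mgrid, grid, mesh]

/-- For a random multiset `𝕏 = {x¹,…,xⁿ}` of `n` points sampled independently and uniformly
from `𝕄_m^d` and every `k ∈ ℕ` with `1 ≤ k < n/2`, the probability that there exists a box
`B ∈ Ω_m` (i.e. an axis-parallel box in `[0,1]^d` of volume exceeding `2^{-m}`) with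
`#(𝕏 ∩ B) ≤ k` is smaller than `(2 n^k/(k-1)!) · exp(m 2^m log(2^{m+3} d) - n 2^{-m-4})`. -/
theorem statement_7 (m d n k : ℕ) (hm : 1 ≤ m) (hd : 1 ≤ d) (hk : 1 ≤ k) (hkn : 2 * k < n) :
    (((Fintype.piFinset fun _ : Fin n => Ggrid m d).filter fun ω =>
        ∃ I : Fin d → Set ℝ, (∀ ℓ, IsIntervalIn01 (I ℓ)) ∧
          ((2:ℝ) ^ m)⁻¹ < (volume (Set.pi Set.univ I)).toReal ∧
          (Finset.univ.filter fun i : Fin n => ω i ∈ Set.pi Set.univ I).card ≤ k).card : ℝ) /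
      ((Fintype.piFinset fun _ : Fin n => Ggrid m d).card : ℝ)
    < 2 * (n : ℝ) ^ k / (Nat.factorial (k - 1)) *
        Real.exp (m * 2 ^ m * Real.log (2 ^ (m + 3) * d) - (n : ℝ) / 2 ^ (m + 4)) := by
  have : Nonempty (Fin d) := Fin.pos_iff_nonempty.1 hd
  have h8 : (8 : ℝ) * 2 ^ m = 2 ^ (m + 3) := by ring
  have h16 : (16 : ℝ) * 2 ^ m = 2 ^ (m + 4) := by ring
  simpa only [boxSparseSamples, ← Ggrid_eq_grid, Nat.cast_pow, Nat.cast_ofNat, Real.logb_pow,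
    Real.logb_self_eq_one one_lt_two, mul_one, Fintype.card_fin, h8, h16] using
    statement_7_general (ι := Fin d) (κ := Fin n) (N := 2 ^ m) (k := k)
      (le_self_pow₀ one_le_two (by omega)) hk (by simpa using hkn.le)
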